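/- arXiv:1509.08224 — 2 statements merged into one kernel-verified Lean document; each statement's English description precedes it below -/
import Mathlib

section
/- There exists c̄>0 such that for all c ∈ (0,c̄), every pair (y₁,y₂) with 1 < y₁ < y_c ≤ y_v(c) < y₂ solving the tangency system satisfies y₁ < Ψ(1/(2δ)); equivalently, the left moving boundary satisfies F(c) = Ψ⁻¹(y₁) < 1/(2δ) for all sufficiently small c>0. -/
/-- The double-tangency system. -/
def TangencySystem (Hl Hrc : ℝ → ℝ) (y₁ y₂ : ℝ) : Prop :=
  deriv Hl y₁ = deriv Hrc y₂ ∧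
  Hl y₁ - deriv Hl y₁ * y₁ = Hrc y₂ - deriv Hrc y₂ * y₂

lemma mono_aux (F F' : ℝ → ℝ) (p r : ℝ) (hpr : p ≤ r) (hd : ∀ x, HasDerivAt F (F' x) x)
    (h : ∀ x, p ≤ x → x ≤ r → 0 ≤ F' x) : F p ≤ F r := by
  have : MonotoneOn F (Set.Icc p r) := by
    apply monotoneOn_of_deriv_nonneg (convex_Icc p r)
    · exact fun x _ => (hd x).continuousAt.continuousWithinAt
    · exact fun x _ => (hd x).differentiableAt.differentiableWithinAt
    · intro x hx
      rw [interior_Icc] at hx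
      rw [(hd x).deriv]
      exact h x hx.1.le hx.2.le
  exact this (Set.left_mem_Icc.2 hpr) (Set.right_mem_Icc.2 hpr) hpr

lemma hasDeriv_A (s a b x : ℝ) :
    HasDerivAt (fun x => Real.exp (-s * x) * (s * (a * x ^ 2 - b) + 2 * a * x))
      (Real.exp (-s * x) * (2 * a + s ^ 2 * b - s ^ 2 * a * x ^ 2)) x := by
  have h1 : HasDerivAt (fun x : ℝ => Real.exp (-s * x)) (Real.exp (-s * x) * (-s * 1)) x :=
    ((hasDerivAt_id x).const_mul (-s)).exp
  have h2 : HasDerivAt (fun x : ℝ => s * (a * x ^ 2 - b) + 2 * a * x)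
      (s * (a * (2 * x ^ 1 * 1)) + 2 * a * 1) x :=
    (((((hasDerivAt_id x).pow 2).const_mul a).sub_const b).const_mul s).add
      ((hasDerivAt_id x).const_mul (2 * a))
  refine HasDerivAt.congr_deriv (h1.mul h2) ?_
  ring

lemma hasDeriv_D (s a b x : ℝ) :
    HasDerivAt (fun x => Real.exp (s * x) * (s * (a * x ^ 2 - b) - 2 * a * x))
      (-(Real.exp (s * x) * (2 * a + s ^ 2 * b - s ^ 2 * a * x ^ 2))) x := by
  have h1 : HasDerivAt (fun x : ℝ => Real.exp (s * x)) (Real.exp (s * x) * (s * 1)) x :=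
    ((hasDerivAt_id x).const_mul s).exp
  have h2 : HasDerivAt (fun x : ℝ => s * (a * x ^ 2 - b) - 2 * a * x)
      (s * (a * (2 * x ^ 1 * 1)) - 2 * a * 1) x :=
    (((((hasDerivAt_id x).pow 2).const_mul a).sub_const b).const_mul s).sub
      ((hasDerivAt_id x).const_mul (2 * a))
  refine HasDerivAt.congr_deriv (h1.mul h2) ?_
  ring

lemma sinh_le_aux (z : ℝ) (hz : 0 ≤ z) : Real.sinh z ≤ z * Real.cosh z := by
  have := mono_aux (fun z => z * Real.cosh z - Real.sinh z) (fun z => z * Real.sinh z) 0 z hz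
    (fun x => by
      have := ((hasDerivAt_id x).mul (Real.hasDerivAt_cosh x)).sub (Real.hasDerivAt_sinh x)
      refine HasDerivAt.congr_deriv (this) ?_
      simp)
    (fun x hx _ => mul_nonneg hx (Real.sinh_nonneg_iff.2 hx))
  simp at this
  linarith

set_option maxHeartbeats 1000000 in
lemma core1 (s a b δ c x0 x1 x2 xM : ℝ) (hs : 0 < s) (ha : 0 < a) (hδ : 0 < δ) (hx0 : 0 < x0)
    (hc : 0 < c) (hab : 2 * a + s ^ 2 * b = 2 * δ) (h01 : x0 ≤ x1) (h1c : x1 < x0 + c / 2)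
    (hc2 : x0 + c / 2 < x2) (h2M : x2 ≤ xM)
    (U z : ℝ) (hqM : 0 < 2 * δ - s ^ 2 * a * xM ^ 2)
    (hU : U = 2 * δ * c / (2 * δ - s ^ 2 * a * xM ^ 2))
    (hz : z = x0 + c / 2 + U)
    (hqz : 0 < 2 * δ - s ^ 2 * a * z ^ 2)
    (hG : Real.cosh (s * U) * (2 * δ - s ^ 2 * a * x0 ^ 2) *
      (1 / (2 * (2 * δ - s ^ 2 * a * z ^ 2)) + 1 / (4 * δ)) < 1)
    (E1 : Real.exp (-s * x1) * (s * (a * x1 ^ 2 - b) + 2 * a * x1) =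
      Real.exp (-s * x2) * (s * (a * x2 ^ 2 - b) + 2 * a * x2) -
        2 * δ * c * Real.exp (-s * x2) * (1 + s * (x2 - (x0 + c / 2))))
    (E2 : Real.exp (s * x1) * (s * (a * x1 ^ 2 - b) - 2 * a * x1) =
      Real.exp (s * x2) * (s * (a * x2 ^ 2 - b) - 2 * a * x2) +
        2 * δ * c * Real.exp (s * x2) * (1 - s * (x2 - (x0 + c / 2)))) : False := by
  set A : ℝ → ℝ := fun x => Real.exp (-s * x) * (s * (a * x ^ 2 - b) + 2 * a * x) with hAdef
  set D : ℝ → ℝ := fun x => Real.exp (s * x) * (s * (a * x ^ 2 - b) - 2 * a * x) with hDdef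
  set q : ℝ → ℝ := fun x => 2 * δ - s ^ 2 * a * x ^ 2 with hqdef
  change A x1 = A x2 - _ at E1
  change D x1 = D x2 + _ at E2
  change 0 < q xM at hqM
  change U = _ / q xM at hU
  change 0 < q z at hqz
  change Real.cosh (s * U) * q x0 * (1 / (2 * q z) + _) < 1 at hG
  have hsa : 0 < s ^ 2 * a := by positivity
  have hq : ∀ x y, 0 ≤ x → x ≤ y → q y ≤ q x := by
    intro x y hx hxy
    have : x ^ 2 ≤ y ^ 2 := by gcongr
    simp only [hqdef]
    nlinarith
  have hA : ∀ x, HasDerivAt A (Real.exp (-s * x) * q x) x := by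
    intro x
    have := hasDeriv_A s a b x
    rw [hab] at this
    exact this
  have hD : ∀ x, HasDerivAt D (-(Real.exp (s * x) * q x)) x := by
    intro x
    have := hasDeriv_D s a b x
    rw [hab] at this
    exact this
  have hee : Real.exp (s * x2) * Real.exp (-s * x2) = 1 := by
    rw [← Real.exp_add]; simp
  have hP : ∀ x, HasDerivAt (fun x => Real.exp (s * x2) * A x - Real.exp (-s * x2) * D x)
      (2 * Real.cosh (s * (x2 - x)) * q x) x := by
    intro x
    refine HasDerivAt.congr_deriv (((hA x).const_mul (Real.exp (s * x2))).sub
      ((hD x).const_mul (Real.exp (-s * x2)))) ?_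
    have e1 : Real.exp (s * (x2 - x)) = Real.exp (s * x2) * Real.exp (-s * x) := by
      rw [← Real.exp_add]; ring_nf
    have e2 : Real.exp (-(s * (x2 - x))) = Real.exp (-s * x2) * Real.exp (s * x) := by
      rw [← Real.exp_add]; ring_nf
    rw [Real.cosh_eq, e1, e2]
    ring
  have hQ : ∀ x, HasDerivAt (fun x => Real.exp (s * x2) * A x + Real.exp (-s * x2) * D x)
      (2 * Real.sinh (s * (x2 - x)) * q x) x := by
    intro x
    refine HasDerivAt.congr_deriv (((hA x).const_mul (Real.exp (s * x2))).add
      ((hD x).const_mul (Real.exp (-s * x2)))) ?_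
    have e1 : Real.exp (s * (x2 - x)) = Real.exp (s * x2) * Real.exp (-s * x) := by
      rw [← Real.exp_add]; ring_nf
    have e2 : Real.exp (-(s * (x2 - x))) = Real.exp (-s * x2) * Real.exp (s * x) := by
      rw [← Real.exp_add]; ring_nf
    rw [Real.sinh_eq, e1, e2]
    ring
  set P : ℝ → ℝ := fun x => Real.exp (s * x2) * A x - Real.exp (-s * x2) * D x with hPdef
  set Q : ℝ → ℝ := fun x => Real.exp (s * x2) * A x + Real.exp (-s * x2) * D x with hQdef
  have hPd : P x2 - P x1 = 4 * δ * c := by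
    simp only [hPdef, E1, E2]
    linear_combination (4 * δ * c) * hee
  have hQd : Q x2 - Q x1 = 4 * δ * c * s * (x2 - (x0 + c / 2)) := by
    simp only [hQdef, E1, E2]
    linear_combination (4 * δ * c * s * (x2 - (x0 + c / 2))) * hee
  clear_value P Q
  clear E1 E2 hA hD
  clear_value A D q
  have h12 : x1 ≤ x2 := by linarith
  have hq2 : 0 < q x2 := lt_of_lt_of_le hqM (hq x2 xM (by linarith) h2M)
  have hq0 : 0 < q x0 := lt_of_lt_of_le hq2 (hq x0 x2 (by linarith) (by linarith))
  set C := Real.cosh (s * (x2 - x1)) with hCdef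
  have hC1 : 1 ≤ C := Real.one_le_cosh _
  have hcosh : ∀ x, x1 ≤ x → x ≤ x2 → Real.cosh (s * (x2 - x)) ≤ C := by
    intro x hx hx'
    apply Real.cosh_le_cosh.2
    rw [abs_of_nonneg (by nlinarith), abs_of_nonneg (by nlinarith)]
    nlinarith
  -- lower bound on P
  have B1 : 2 * q x2 * (x2 - x1) ≤ 4 * δ * c := by
    have := mono_aux (fun x => P x - 2 * q x2 * x)
      (fun x => 2 * Real.cosh (s * (x2 - x)) * q x - 2 * q x2 * 1) x1 x2 h12
      (fun x => (hP x).sub ((hasDerivAt_id x).const_mul (2 * q x2)))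
      (fun x hx hx' => by
        have := hq x x2 (by linarith) hx'
        have := Real.one_le_cosh (s * (x2 - x))
        nlinarith)
    linarith
  have B2 : 4 * δ * c ≤ 2 * q x0 * C * (x2 - x1) := by
    have := mono_aux (fun x => 2 * q x0 * C * x - P x)
      (fun x => 2 * q x0 * C * 1 - 2 * Real.cosh (s * (x2 - x)) * q x) x1 x2 h12
      (fun x => ((hasDerivAt_id x).const_mul (2 * q x0 * C)).sub (hP x))
      (fun x hx hx' => by
        have h1 := hq x0 x (by linarith) (by linarith)
        have h2 := hq x x2 (by linarith) hx'
        have h3 := hcosh x hx hx'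
        have : Real.cosh (s * (x2 - x)) * q x ≤ C * q x0 := by
          apply mul_le_mul h3 h1 (by linarith) (by linarith)
        linarith)
    linarith
  have B3 : 4 * δ * c * s * (x2 - (x0 + c / 2)) ≤ q x0 * C * s * (x2 - x1) ^ 2 := by
    have := mono_aux (fun x => - (q x0 * C * s * (x2 - x) ^ 2) - Q x)
      (fun x => 2 * (q x0 * C * s * (x2 - x)) - 2 * Real.sinh (s * (x2 - x)) * q x) x1 x2 h12
      (fun x => by
        have h0 : HasDerivAt (fun x : ℝ => x2 - x) (-1) x := (hasDerivAt_id x).const_sub x2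
        have h1 : HasDerivAt (fun x : ℝ => (x2 - x) ^ 2) (2 * (x2 - x) ^ 1 * (-1)) x := h0.pow 2
        have h2 := ((h1.const_mul (q x0 * C * s)).neg).sub (hQ x)
        refine HasDerivAt.congr_deriv h2 ?_
        ring)
      (fun x hx hx' => by
        have h1 := hq x0 x (by linarith) (by linarith)
        have h2 := hq x x2 (by linarith) hx'
        have h3 := hcosh x hx hx'
        have h5 : 0 ≤ s * (x2 - x) := mul_nonneg hs.le (by linarith)
        have h4 := sinh_le_aux (s * (x2 - x)) h5
        have h6 : Real.sinh (s * (x2 - x)) ≤ s * (x2 - x) * C :=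
          h4.trans (by gcongr)
        have : Real.sinh (s * (x2 - x)) * q x ≤ s * (x2 - x) * C * q x0 := by
          apply mul_le_mul h6 h1 (by linarith) (by positivity)
        linarith)
    rw [sub_self] at this
    linarith
  set u := x2 - x1 with hu
  have hu0 : 0 < u := by linarith
  have hqM2 : q xM ≤ q x2 := hq x2 xM (by linarith) h2M
  have huU : u ≤ U := by
    rw [hU, le_div_iff₀ hqM]
    have := mul_le_mul_of_nonneg_right hqM2 hu0.le
    linarith
  have hCU : C ≤ Real.cosh (s * U) := by
    apply Real.cosh_le_cosh.2
    rw [abs_of_nonneg (by positivity), abs_of_nonneg (mul_nonneg hs.le (by linarith))]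
    gcongr
  have hqz2 : q z ≤ q x2 := hq x2 z (by linarith) (by linarith)
  set t := x2 - (x0 + c / 2) with ht
  have B3' : 4 * δ * c * t ≤ q x0 * C * u ^ 2 := by
    have : s * (4 * δ * c * t) ≤ s * (q x0 * C * u ^ 2) := by linarith
    exact le_of_mul_le_mul_left this hs
  have B4 : 2 * q z * t ≤ q x0 * C * u := by
    have h1 : 2 * q z * u * t ≤ 4 * δ * c * t := by
      have : 0 ≤ t := by linarith
      have : 2 * q z * u ≤ 4 * δ * c := by
        have := mul_le_mul_of_nonneg_right hqz2 hu0.le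
        linarith
      gcongr
    have : u * (2 * q z * t) ≤ u * (q x0 * C * u) := by linarith
    exact le_of_mul_le_mul_left this hu0
  have h7 : t ≤ q x0 * C * u * (1 / (2 * q z)) := by
    rw [mul_one_div, le_div_iff₀ (by positivity)]
    linarith
  have h8 : c / 2 ≤ q x0 * C * u * (1 / (4 * δ)) := by
    rw [mul_one_div, le_div_iff₀ (by positivity)]
    linarith
  have h9 : u ≤ q x0 * C * u * (1 / (2 * q z) + 1 / (4 * δ)) := by
    have : u - t ≤ c / 2 := by linarith
    linarith
  have h10 : q x0 * C * u * (1 / (2 * q z) + 1 / (4 * δ)) ≤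
      u * (Real.cosh (s * U) * q x0 * (1 / (2 * q z) + 1 / (4 * δ))) := by
    have : q x0 * C * u * (1 / (2 * q z) + 1 / (4 * δ)) =
      u * (C * q x0 * (1 / (2 * q z) + 1 / (4 * δ))) := by ring
    rw [this]
    gcongr
  have h11 := mul_lt_mul_of_pos_left hG hu0
  linarith

lemma deriv_aux (s x h' : ℝ) (hs : 0 < s) (h : ℝ → ℝ) (hh : HasDerivAt h h' x) :
    HasDerivAt (fun y => Real.sqrt y * h (Real.log y / (2 * s)))
      (Real.exp (-s * x) * (s * h x + h') / (2 * s)) (Real.exp (2 * s * x)) := by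
  have hpos := Real.exp_pos (2 * s * x)
  have hx : Real.log (Real.exp (2 * s * x)) / (2 * s) = x := by
    rw [Real.log_exp]; field_simp
  have hsq : Real.sqrt (Real.exp (2 * s * x)) = Real.exp (s * x) := by
    rw [show 2 * s * x = s * x + s * x by ring, Real.exp_add, Real.sqrt_mul_self (Real.exp_pos _).le]
  have h1 := Real.hasDerivAt_sqrt hpos.ne'
  have h2 := (Real.hasDerivAt_log hpos.ne').div_const (2 * s)
  have h3 : HasDerivAt h h' (Real.log (Real.exp (2 * s * x)) / (2 * s)) := by rw [hx]; exact hh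
  have h4 := h1.mul (h3.comp (Real.exp (2 * s * x)) h2)
  refine HasDerivAt.congr_deriv (h4) ?_
  simp only [Function.comp_apply]
  rw [hx, hsq]
  have e1 : Real.exp (-s * x) = (Real.exp (s * x))⁻¹ := by rw [← Real.exp_neg]; ring_nf
  have e2 : Real.exp (2 * s * x) = Real.exp (s * x) * Real.exp (s * x) := by
    rw [← Real.exp_add]; ring_nf
  rw [e1, e2]
  have := Real.exp_pos (s * x)
  field_simp

lemma A_mono (s a b δ x y : ℝ) (ha : 0 < a)
    (hab : 2 * a + s ^ 2 * b = 2 * δ) (hx : 0 ≤ x) (hxy : x ≤ y)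
    (hq : 0 < 2 * δ - s ^ 2 * a * y ^ 2) :
    Real.exp (-s * x) * (s * (a * x ^ 2 - b) + 2 * a * x) ≤
    Real.exp (-s * y) * (s * (a * y ^ 2 - b) + 2 * a * y) := by
  refine mono_aux (fun x => Real.exp (-s * x) * (s * (a * x ^ 2 - b) + 2 * a * x)) _ x y hxy
    (hasDeriv_A s a b) ?_
  intro w h1 h2
  rw [hab]
  have : w ^ 2 ≤ y ^ 2 := by have := hx.trans h1; gcongr
  have : s ^ 2 * a * w ^ 2 ≤ s ^ 2 * a * y ^ 2 := by gcongr
  exact mul_nonneg (Real.exp_pos _).le (by linarith)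

lemma case2_bound (s l c x : ℝ) (hs : 0 < s) (hl : 0 < l) (hc : 0 < c) (hx : 0 < x) :
    -(4 * l * c) ≤ Real.exp (-s * x) * (s * (l * c * (c - 2 * x) + c) - 2 * l * c) := by
  have e : Real.exp (-s * x) * Real.exp (s * x) = 1 := by rw [← Real.exp_add]; simp
  have h1 := Real.add_one_le_exp (s * x)
  have hp := Real.exp_pos (-s * x)
  have h2 : Real.exp (-s * x) * (s * x + 1) ≤ 1 := by
    calc _ ≤ Real.exp (-s * x) * Real.exp (s * x) := by gcongr
      _ = 1 := e
  have h3 : Real.exp (-s * x) * (s * (l * c * (c - 2 * x) + c) - 2 * l * c) =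
    Real.exp (-s * x) * (s * l * c ^ 2 + s * c) - 2 * l * c * (Real.exp (-s * x) * (s * x + 1)) := by
    ring
  rw [h3]
  have h4 : 0 ≤ Real.exp (-s * x) * (s * l * c ^ 2 + s * c) := by positivity
  have h5 : 2 * l * c * (Real.exp (-s * x) * (s * x + 1)) ≤ 2 * l * c * 1 := by gcongr
  have : 0 < l * c := by positivity
  linarith

lemma limit_aux (s a b δ l x0 f0 : ℝ) (ha : 0 < a) (hs : 0 < s) (hδ : 0 < δ) (hx0 : 0 < x0)
    (hf : x0 < f0) (hqf : 0 < 2 * δ - s ^ 2 * a * f0 ^ 2)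
    (hA : Real.exp (-s * x0) * (s * (a * x0 ^ 2 - b) + 2 * a * x0) < 0) :
    ∃ cbar > (0 : ℝ), ∀ c, 0 < c → c < cbar →
      (0 < 2 * δ - s ^ 2 * a * (f0 + c) ^ 2) ∧
      (0 < 2 * δ - s ^ 2 * a *
        (x0 + c / 2 + 2 * δ * c / (2 * δ - s ^ 2 * a * (f0 + c) ^ 2)) ^ 2) ∧
      (Real.cosh (s * (2 * δ * c / (2 * δ - s ^ 2 * a * (f0 + c) ^ 2))) *
        (2 * δ - s ^ 2 * a * x0 ^ 2) *
        (1 / (2 * (2 * δ - s ^ 2 * a *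
        (x0 + c / 2 + 2 * δ * c / (2 * δ - s ^ 2 * a * (f0 + c) ^ 2)) ^ 2)) + 1 / (4 * δ)) < 1) ∧
      (Real.exp (-s * (x0 + c / 2)) * (s * (a * (x0 + c / 2) ^ 2 - b) + 2 * a * (x0 + c / 2))
        + 4 * l * c < 0) ∧
      (0 < 2 * δ - s ^ 2 * a * (x0 + c / 2) ^ 2) := by
  have hsa : 0 < s ^ 2 * a := by positivity
  have hq0 : 0 < 2 * δ - s ^ 2 * a * x0 ^ 2 := by
    have : s ^ 2 * a * x0 ^ 2 ≤ s ^ 2 * a * f0 ^ 2 := by gcongr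
    linarith
  have c1 : ContinuousAt (fun c : ℝ => 2 * δ - s ^ 2 * a * (f0 + c) ^ 2) 0 := by fun_prop
  have c2 : ContinuousAt (fun c : ℝ => 2 * δ * c / (2 * δ - s ^ 2 * a * (f0 + c) ^ 2)) 0 := by
    apply ContinuousAt.div (by fun_prop) c1
    simpa using hqf.ne'
  have c3 : ContinuousAt (fun c : ℝ => 2 * δ - s ^ 2 * a *
      (x0 + c / 2 + 2 * δ * c / (2 * δ - s ^ 2 * a * (f0 + c) ^ 2)) ^ 2) 0 := by
    fun_prop
  have c4 : ContinuousAt (fun c : ℝ =>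
      (Real.cosh (s * (2 * δ * c / (2 * δ - s ^ 2 * a * (f0 + c) ^ 2))) *
        (2 * δ - s ^ 2 * a * x0 ^ 2) *
        (1 / (2 * (2 * δ - s ^ 2 * a *
        (x0 + c / 2 + 2 * δ * c / (2 * δ - s ^ 2 * a * (f0 + c) ^ 2)) ^ 2)) + 1 / (4 * δ)))) 0 := by
    have : ContinuousAt (fun c : ℝ => Real.cosh (s * (2 * δ * c / (2 * δ - s ^ 2 * a * (f0 + c) ^ 2)))) 0 :=
      Real.continuous_cosh.continuousAt.comp (c2.const_mul s)
    refine (this.mul continuousAt_const).mul (ContinuousAt.add ?_ continuousAt_const)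
    refine continuousAt_const.div (c3.const_mul 2) ?_
    simpa using hq0.ne'
  have c5 : ContinuousAt (fun c : ℝ =>
      Real.exp (-s * (x0 + c / 2)) * (s * (a * (x0 + c / 2) ^ 2 - b) + 2 * a * (x0 + c / 2))
        + 4 * l * c) 0 := by fun_prop
  have c6 : ContinuousAt (fun c : ℝ => 2 * δ - s ^ 2 * a * (x0 + c / 2) ^ 2) 0 := by fun_prop
  have e1 := c1.eventually_const_lt (u := 0) (by simpa using hqf)
  have e3 := c3.eventually_const_lt (u := 0) (by simpa using hq0)
  have e4 := c4.eventually_lt_const (u := 1) (by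
    simp only [mul_zero, zero_div, add_zero, Real.cosh_zero, one_mul]
    have h1 : (2 * δ - s ^ 2 * a * x0 ^ 2) * (1 / (2 * (2 * δ - s ^ 2 * a * x0 ^ 2)) + 1 / (4 * δ)) =
      1 / 2 + (2 * δ - s ^ 2 * a * x0 ^ 2) / (4 * δ) := by
      field_simp
    rw [h1]
    have : (2 * δ - s ^ 2 * a * x0 ^ 2) / (4 * δ) < 1 / 2 := by
      rw [div_lt_iff₀ (by positivity)]
      have : 0 < s ^ 2 * a * x0 ^ 2 := by positivity
      linarith
    linarith)
  have e5 := c5.eventually_lt_const (u := 0) (by simpa using hA)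
  have e6 := c6.eventually_const_lt (u := 0) (by simpa using hq0)
  obtain ⟨ε, hε, h⟩ := Metric.eventually_nhds_iff.1 (e1.and (e3.and (e4.and (e5.and e6))))
  refine ⟨ε, hε, fun c hc hc' => h ?_⟩
  rw [Real.dist_eq, sub_zero, abs_of_pos hc]
  exact hc'

/-- for all sufficiently small c the tangency pair satisfies
y₁ < Ψ(1/(2δ)); equivalently F(c) = Ψ⁻¹(y₁) < 1/(2δ). -/
theorem stmt_16 (α δ lam : ℝ) (hα : 0 < α) (hδ : 0 < δ) (hlam : 0 < lam)
    (hltd : lam < α * δ)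
    (f₀ : ℝ)
    (hf₀ : f₀ = (1 / Real.sqrt (2 * α)) * (Real.sqrt ((α * δ + lam) / (α * δ - lam)) - 1))
    (hf₀big : α / (2 * lam) < f₀)
    (Ψ : ℝ → ℝ) (hΨ : ∀ x, Ψ x = Real.exp (2 * Real.sqrt (2 * α) * x))
    (Hl : ℝ → ℝ)
    (hHl : ∀ y, 0 < y → Hl y = Real.sqrt y *
      (-(lam / α ^ 2) + ((δ - lam / α) / (8 * α)) * (Real.log y) ^ 2))
    (B₀ : ℝ)
    (hB₀ : B₀ = -(2 * f₀ / (α * Real.sqrt (2 * α))) * (α * δ - lam) *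
      Real.exp (f₀ * Real.sqrt (2 * α)))
    (hr1 hr2 hr Hr : ℝ → ℝ → ℝ)
    (hhr1 : ∀ c x, hr1 c x = δ * c * (c - 2 * x) + (δ - lam / α) * x ^ 2 + c - lam / α ^ 2)
    (hhr2 : ∀ c x, hr2 c x = (lam / α) * c * (c - 2 * x) + c +
      B₀ * Real.exp (-(x - c) * Real.sqrt (2 * α)))
    (hhra : ∀ c x, x ≤ f₀ + c → hr c x = hr1 c x)
    (hhrb : ∀ c x, f₀ + c ≤ x → hr c x = hr2 c x)
    (hHr : ∀ c y, 0 < y → Hr c y = Real.sqrt y * hr c (Real.log y / (2 * Real.sqrt (2 * α))))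
    (xv : ℝ → ℝ)
    (hxv : ∀ c, 0 < c →
      (xv c < f₀ + c ∧
        δ - (α * δ - lam) * (xv c) ^ 2 + c * α * (δ * (2 * xv c - c) - 1) = 0 ∧
        ∀ x, x < f₀ + c →
          δ - (α * δ - lam) * x ^ 2 + c * α * (δ * (2 * x - c) - 1) = 0 → x = xv c)) :
    ∃ cbar > (0 : ℝ), ∀ c, 0 < c → c < cbar → ∀ y₁ y₂ : ℝ,
      1 < y₁ → y₁ < Ψ (1 / (2 * δ) + c / 2) →
      Ψ (1 / (2 * δ) + c / 2) ≤ max (Ψ (1 / (2 * δ) + c / 2)) (Ψ (xv c)) →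
      max (Ψ (1 / (2 * δ) + c / 2)) (Ψ (xv c)) < y₂ →
      TangencySystem Hl (Hr c) y₁ y₂ →
      y₁ < Ψ (1 / (2 * δ)) ∧ Real.log y₁ / (2 * Real.sqrt (2 * α)) < 1 / (2 * δ) := by
  have hs : 0 < Real.sqrt (2 * α) := Real.sqrt_pos.2 (by positivity)
  have hs2 : Real.sqrt (2 * α) ^ 2 = 2 * α := Real.sq_sqrt (by positivity)
  set s := Real.sqrt (2 * α) with hsdef
  obtain ⟨a, had⟩ : ∃ a, a = δ - lam / α := ⟨_, rfl⟩
  obtain ⟨b, hbd⟩ : ∃ b, b = lam / α ^ 2 := ⟨_, rfl⟩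
  obtain ⟨l, hld⟩ : ∃ l, l = lam / α := ⟨_, rfl⟩
  obtain ⟨x0, hx0d⟩ : ∃ x0, x0 = 1 / (2 * δ) := ⟨_, rfl⟩
  have hl : 0 < l := by rw [hld]; positivity
  have haa : α * a = α * δ - lam := by rw [had]; field_simp
  have ha : 0 < a := by
    have : 0 < α * a := by linarith
    exact pos_of_mul_pos_right this hα.le
  have hab : 2 * a + s ^ 2 * b = 2 * δ := by
    rw [hs2, had, hbd]; field_simp; ring
  have hx0 : 0 < x0 := by rw [hx0d]; positivity
  have hx0f : x0 < f₀ := by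
    refine lt_trans ?_ hf₀big
    rw [hx0d, div_lt_div_iff₀ (by positivity) (by positivity)]
    linarith
  have hf0 : 0 < f₀ := hx0.trans hx0f
  have hfsq : (s * f₀ + 1) ^ 2 * (α * a) = α * δ + lam := by
    have : s * f₀ + 1 = Real.sqrt ((α * δ + lam) / (α * δ - lam)) := by
      rw [hf₀]; field_simp; ring
    have hp : 0 < α * δ - lam := by linarith
    rw [this, Real.sq_sqrt (by positivity), haa]
    field_simp
  have hAf : s * (a * f₀ ^ 2 - b) + 2 * a * f₀ = 0 := by
    have hb : α * (α * b) = lam := by rw [hbd]; field_simp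
    have h1 : α * (2 * α * a * f₀ ^ 2 + 2 * s * f₀ * a - 2 * α * b) = 0 := by
      have : α * (s ^ 2 * a * f₀ ^ 2 + 2 * s * f₀ * a - 2 * α * b) = 0 := by
        linear_combination hfsq - haa - 2 * hb
      rwa [hs2] at this
    have h2 := (mul_eq_zero.1 h1).resolve_left hα.ne'
    have h3 : s * (s * (a * f₀ ^ 2 - b) + 2 * a * f₀) = 0 := by
      linear_combination h2 + (a * f₀ ^ 2 - b) * hs2
    exact (mul_eq_zero.1 h3).resolve_left hs.ne'
  have hqf : 0 < 2 * δ - s ^ 2 * a * f₀ ^ 2 := by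
    have h1 : 0 < s * f₀ := by positivity
    have h2 : 0 < α * a := by positivity
    have h3 : α * (s ^ 2 * a * f₀ ^ 2) < α * (2 * δ) := by nlinarith
    have := lt_of_mul_lt_mul_left h3 hα.le
    linarith
  have hA0 : Real.exp (-s * x0) * (s * (a * x0 ^ 2 - b) + 2 * a * x0) < 0 := by
    have h1 : a * x0 ^ 2 < a * f₀ ^ 2 := by gcongr
    have h2 : a * x0 < a * f₀ := by gcongr
    apply mul_neg_of_pos_of_neg (Real.exp_pos _)
    nlinarith
  obtain ⟨cbar, hcb, hlim⟩ := limit_aux s a b δ l x0 f₀ ha hs hδ hx0 hx0f hqf hA0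
  refine ⟨cbar, hcb, ?_⟩
  intro c hc hcc y₁ y₂ hy1 hy1c _ hy2 hT
  obtain ⟨L1, L2, L3, L4, L5⟩ := hlim c hc hcc
  obtain ⟨T1, T2⟩ := hT
  rw [← hx0d] at hy1c hy2 ⊢
  have hy2c := (le_max_left _ _).trans_lt hy2
  rw [hΨ] at hy1c hy2c
  have hy1p : 0 < y₁ := by linarith
  have hy2p : 0 < y₂ := (Real.exp_pos _).trans hy2c
  obtain ⟨x1, hx1⟩ : ∃ x1, y₁ = Real.exp (2 * s * x1) :=
    ⟨Real.log y₁ / (2 * s), by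
      rw [mul_div_cancel₀ _ (by positivity : 2 * s ≠ 0), Real.exp_log hy1p]⟩
  obtain ⟨x2, hx2⟩ : ∃ x2, y₂ = Real.exp (2 * s * x2) :=
    ⟨Real.log y₂ / (2 * s), by
      rw [mul_div_cancel₀ _ (by positivity : 2 * s ≠ 0), Real.exp_log hy2p]⟩
  have h2s : 0 < 2 * s := by positivity
  have hlog : ∀ x, Real.log (Real.exp (2 * s * x)) / (2 * s) = x := by
    intro x; rw [Real.log_exp]; field_simp
  have hsq : ∀ x, Real.sqrt (Real.exp (2 * s * x)) = Real.exp (s * x) := by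
    intro x
    rw [show 2 * s * x = s * x + s * x by ring, Real.exp_add, Real.sqrt_mul_self (Real.exp_pos _).le]
  have hee : ∀ x, Real.exp (-s * x) * Real.exp (2 * s * x) = Real.exp (s * x) := by
    intro x; rw [← Real.exp_add]; ring_nf
  subst hx1 hx2
  rw [hlog, hΨ, Real.exp_lt_exp, mul_lt_mul_iff_right₀ h2s, and_self]
  rw [Real.exp_lt_exp, mul_lt_mul_iff_right₀ h2s] at hy1c hy2c
  by_contra hcon
  have h01 : x0 ≤ x1 := not_lt.1 hcon
  -- Hl
  have hgd : ∀ x, HasDerivAt (fun x : ℝ => a * x ^ 2 - b) (2 * a * x) x := by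
    intro x
    refine HasDerivAt.congr_deriv (((((hasDerivAt_id x).pow 2).const_mul a).sub_const b)) ?_
    simp; ring
  have hHl' : ∀ y, 0 < y → Hl y = Real.sqrt y * (a * (Real.log y / (2 * s)) ^ 2 - b) := by
    intro y hy
    rw [hHl y hy, had, hbd, div_pow, mul_pow, hs2]
    field_simp
    ring
  have dl : deriv Hl (Real.exp (2 * s * x1)) =
      Real.exp (-s * x1) * (s * (a * x1 ^ 2 - b) + 2 * a * x1) / (2 * s) := by
    have h1 := deriv_aux s x1 _ hs _ (hgd x1)
    apply HasDerivAt.deriv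
    apply h1.congr_of_eventuallyEq
    filter_upwards [lt_mem_nhds (Real.exp_pos (2 * s * x1))] with y hy
    exact hHl' y hy
  have vl : Hl (Real.exp (2 * s * x1)) = Real.exp (s * x1) * (a * x1 ^ 2 - b) := by
    rw [hHl' _ (Real.exp_pos _), hlog, hsq]
  have hA1neg : Real.exp (-s * x1) * (s * (a * x1 ^ 2 - b) + 2 * a * x1) < -(4 * l * c) := by
    have := A_mono s a b δ x1 (x0 + c / 2) ha hab (by linarith) hy1c.le L5
    linarith
  rcases lt_or_ge x2 (f₀ + c) with hcase | hcase
  · -- left piece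
    have hrd : HasDerivAt (hr1 c) (2 * a * x2 - 2 * δ * c) x2 := by
      have : hr1 c = fun x => (a * x ^ 2 - b) + ((δ * c ^ 2 + c) - 2 * δ * c * x) := by
        funext x; rw [hhr1, had, hbd]; ring
      rw [this]
      refine HasDerivAt.congr_deriv ((hgd x2).add (((hasDerivAt_id x2).const_mul (2 * δ * c)).const_sub (δ * c ^ 2 + c))) ?_
      ring
    have vr1 : hr1 c x2 = (a * x2 ^ 2 - b) - 2 * δ * c * (x2 - (x0 + c / 2)) := by
      rw [hhr1, had, hbd, hx0d]; field_simp; ring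
    have dr : deriv (Hr c) (Real.exp (2 * s * x2)) =
        Real.exp (-s * x2) * (s * hr1 c x2 + (2 * a * x2 - 2 * δ * c)) / (2 * s) := by
      apply HasDerivAt.deriv
      apply (deriv_aux s x2 _ hs _ hrd).congr_of_eventuallyEq
      filter_upwards [lt_mem_nhds (Real.exp_pos (2 * s * x2)),
        gt_mem_nhds (show Real.exp (2 * s * x2) < Real.exp (2 * s * (f₀ + c)) by
          rw [Real.exp_lt_exp]; gcongr)] with y hy hy'
      rw [hHr c y hy, hhra]
      rw [div_le_iff₀ h2s, ← Real.log_exp ((f₀ + c) * (2 * s))]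
      apply Real.log_le_log hy
      rw [mul_comm]; exact hy'.le
    have vr : Hr c (Real.exp (2 * s * x2)) = Real.exp (s * x2) * hr1 c x2 := by
      rw [hHr c _ (Real.exp_pos _), hlog, hsq, hhra c x2 hcase.le]
    rw [dl, dr] at T1
    rw [dl, dr, vl, vr, vr1] at T2
    rw [vr1] at T1
    refine core1 s a b δ c x0 x1 x2 (f₀ + c) hs ha hδ hx0 hc hab h01 hy1c hy2c hcase.le
      _ _ L1 rfl rfl L2 L3 ?_ ?_
    · rw [div_left_inj' h2s.ne'] at T1
      linear_combination T1
    · have k1 := hee x1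
      have k2 := hee x2
      have hl1 : Real.exp (s * x1) * (a * x1 ^ 2 - b) - Real.exp (-s * x1) *
          (s * (a * x1 ^ 2 - b) + 2 * a * x1) / (2 * s) * Real.exp (2 * s * x1) =
          Real.exp (s * x1) * (s * (a * x1 ^ 2 - b) - 2 * a * x1) / (2 * s) := by
        rw [← k1]; field_simp; ring
      have hl2 : ∀ v w : ℝ, Real.exp (s * x2) * v - Real.exp (-s * x2) *
          (s * v + w) / (2 * s) * Real.exp (2 * s * x2) =
          Real.exp (s * x2) * (s * v - w) / (2 * s) := by
        intro v w
        rw [← k2]; field_simp; ring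
      rw [hl1, hl2, div_left_inj' h2s.ne'] at T2
      linear_combination T2
  · -- right piece
    have hrd : HasDerivAt (hr2 c) (-(2 * l * c) - s * (B₀ * Real.exp (-(x2 - c) * s))) x2 := by
      have : hr2 c = fun x => ((l * c ^ 2 + c) - 2 * l * c * x) + B₀ * Real.exp (-(x - c) * s) := by
        funext x; rw [hhr2, hld]; ring
      rw [this]
      have e := (((((hasDerivAt_id x2).sub_const c).neg).mul_const s).exp).const_mul B₀
      refine HasDerivAt.congr_deriv ((((hasDerivAt_id x2).const_mul (2 * l * c)).const_sub (l * c ^ 2 + c)).add e) ?_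
      simp
      ring
    have key : deriv (Hr c) (Real.exp (2 * s * x2)) = 0 ∨
        deriv (Hr c) (Real.exp (2 * s * x2)) =
        Real.exp (-s * x2) * (s * (l * c * (c - 2 * x2) + c) - 2 * l * c) / (2 * s) := by
      by_cases hdf : DifferentiableAt ℝ (Hr c) (Real.exp (2 * s * x2))
      · right
        have h1 := hdf.hasDerivAt.hasDerivWithinAt (s := Set.Ici (Real.exp (2 * s * x2)))
        have h2 := (deriv_aux s x2 _ hs _ hrd).hasDerivWithinAt (s := Set.Ici (Real.exp (2 * s * x2)))
        have hEq : ∀ y ∈ Set.Ici (Real.exp (2 * s * x2)),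
            Hr c y = Real.sqrt y * hr2 c (Real.log y / (2 * s)) := by
          intro y hy
          have hy0 : 0 < y := (Real.exp_pos _).trans_le hy
          rw [hHr c y hy0, hhrb]
          refine hcase.trans ?_
          rw [← hlog x2]
          gcongr
          exact hy
        have h3 := h2.congr hEq (hEq _ (Set.mem_Ici.2 le_rfl))
        rw [(uniqueDiffWithinAt_Ici _).eq_deriv _ h1 h3, hhr2, hld]
        ring
      · left
        exact deriv_zero_of_not_differentiableAt hdf
    have hx2 : 0 < x2 := by linarith
    have hb := case2_bound s l c x2 hs hl hc hx2
    have hlc : 0 < l * c := by positivity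
    rw [dl] at T1
    rcases key with k | k
    · rw [k, div_eq_zero_iff] at T1
      rcases T1 with T1 | T1 <;> linarith
    · rw [k, div_left_inj' h2s.ne'] at T1
      linarith
end

section
/- There exists c₀>0 such that, on (0,c₀), the tangency-pair functions are monotone: c ↦ ŷ₁(c) is strictly decreasing and c ↦ ŷ₂(c) is strictly increasing; moreover G(c)=Ψ⁻¹(ŷ₂(c)) is differentiable with G'(c) > 1 for all c ∈ (0,c₀). Equivalently, the left boundary F(c)=Ψ⁻¹(ŷ₁(c)) is strictly decreasing and the right boundary G(c) is strictly increasing on (0,c₀). -/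
section Aux
open Real Filter Topology Set

lemma aux_sinh : ∃ S S2 : ℝ → ℝ, ContDiffAt ℝ 1 S 0 ∧ ContDiffAt ℝ 1 S2 0 ∧ S 0 = 1 ∧ S2 0 = 0 ∧
    (∀ u, sinh u = u * S u) ∧ (∀ u, S u = 1 + u * S2 u) := by
  have h0 : AnalyticAt ℝ Real.sinh 0 := Real.analyticAt_sinh
  obtain ⟨p, hp⟩ := h0
  have h1 := hp.has_fpower_series_dslope_fslope
  have h2 := h1.has_fpower_series_dslope_fslope
  refine ⟨dslope sinh 0, dslope (dslope sinh 0) 0, h1.analyticAt.contDiffAt,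
    h2.analyticAt.contDiffAt, ?_, ?_, ?_, ?_⟩
  · simp [dslope_same]
  · rw [dslope_same]
    have hev : ∀ u, dslope sinh 0 (-u) = dslope sinh 0 u := by
      intro u
      rcases eq_or_ne u 0 with rfl | hu
      · simp
      · rw [dslope_of_ne _ hu, dslope_of_ne _ (neg_ne_zero.mpr hu)]
        simp [slope]
    have hd := deriv_comp_neg (f := dslope sinh 0) (x := (0:ℝ))
    rw [funext hev] at hd
    simp only [neg_zero] at hd
    linarith
  · intro u
    have := sub_smul_dslope sinh 0 u
    simp at this
    linarith
  · intro u
    have := sub_smul_dslope (dslope sinh 0) 0 u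
    simp at this
    linarith

lemma aux_ift (γ E : ℝ × ℝ → ℝ) (δ g x₀ : ℝ) (hδ : 0 < δ) (hg : 0 < g) (hx : 2 * δ * x₀ = 1)
    (hγ : ContDiffAt ℝ 1 γ (x₀, 0)) (hE : ContDiffAt ℝ 1 E (x₀, 0))
    (hγ0 : γ (x₀, 0) = g) (hE0 : E (x₀, 0) = δ * g) :
    ∃ X T : ℝ → ℝ, ContDiffAt ℝ 1 X 0 ∧ ContDiffAt ℝ 1 T 0 ∧ X 0 = x₀ ∧ T 0 = 0 ∧
      deriv X 0 = (g - 1) / (2 * g) ∧ deriv T 0 = 1 / g ∧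
      ∀ᶠ c in 𝓝 (0:ℝ), T c * γ (X c, T c) = c ∧
        T c * E (X c, T c) + γ (X c, T c) *
          (1 + δ * (T c * γ (X c, T c) - 2 * X c - 2 * T c)) = 0 := by
  let f : ℝ × ℝ → ℝ × ℝ := fun p => (p.2 * γ p,
    p.2 * E p + γ p * (1 + δ * (p.2 * γ p - 2 * p.1 - 2 * p.2)))
  have hf : ContDiffAt ℝ 1 f (x₀, 0) := by
    have h1 : ContDiffAt ℝ 1 (fun p : ℝ × ℝ => p.1) (x₀, 0) := contDiffAt_fst
    have h2 : ContDiffAt ℝ 1 (fun p : ℝ × ℝ => p.2) (x₀, 0) := contDiffAt_snd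
    exact (h2.mul hγ).prodMk ((h2.mul hE).add (hγ.mul (contDiffAt_const.add
      (contDiffAt_const.mul (((h2.mul hγ).sub (contDiffAt_const.mul h1)).sub
        (contDiffAt_const.mul h2))))))
  let L1 : ℝ × ℝ →L[ℝ] ℝ × ℝ := (g • ContinuousLinearMap.snd ℝ ℝ ℝ).prod
    ((δ * g * (g - 1)) • ContinuousLinearMap.snd ℝ ℝ ℝ
      - (2 * δ * g) • ContinuousLinearMap.fst ℝ ℝ ℝ)
  let L2 : ℝ × ℝ →L[ℝ] ℝ × ℝ := (((g - 1) / (2 * g)) • ContinuousLinearMap.fst ℝ ℝ ℝ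
      - (1 / (2 * δ * g)) • ContinuousLinearMap.snd ℝ ℝ ℝ).prod
    ((1 / g) • ContinuousLinearMap.fst ℝ ℝ ℝ)
  let e : (ℝ × ℝ) ≃L[ℝ] (ℝ × ℝ) := ContinuousLinearEquiv.equivOfInverse L1 L2
    (by
      rintro ⟨a, b⟩
      simp only [L1, L2, ContinuousLinearMap.prod_apply, _root_.sub_apply,
        _root_.smul_apply, ContinuousLinearMap.coe_fst',
        ContinuousLinearMap.coe_snd', smul_eq_mul, Prod.mk.injEq]
      constructor <;> field_simp <;> ring)
    (by
      rintro ⟨a, b⟩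
      simp only [L1, L2, ContinuousLinearMap.prod_apply, _root_.sub_apply,
        _root_.smul_apply, ContinuousLinearMap.coe_fst',
        ContinuousLinearMap.coe_snd', smul_eq_mul, Prod.mk.injEq]
      constructor <;> field_simp <;> ring)
  have hf' : HasFDerivAt f (e : ℝ × ℝ →L[ℝ] ℝ × ℝ) (x₀, 0) := by
    have h1 : HasFDerivAt (fun p : ℝ × ℝ => p.1) (ContinuousLinearMap.fst ℝ ℝ ℝ) (x₀, (0:ℝ)) :=
      hasFDerivAt_fst
    have h2 : HasFDerivAt (fun p : ℝ × ℝ => p.2) (ContinuousLinearMap.snd ℝ ℝ ℝ) (x₀, (0:ℝ)) :=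
      hasFDerivAt_snd
    have hγ' := (hγ.differentiableAt one_ne_zero).hasFDerivAt
    have hE' := (hE.differentiableAt one_ne_zero).hasFDerivAt
    have key := (h2.mul hγ').prodMk ((h2.mul hE').add (hγ'.mul
      (((((h2.mul hγ').sub (h1.const_mul 2)).sub (h2.const_mul 2)).const_mul δ).const_add 1)))
    refine key.congr_fderiv ?_
    apply ContinuousLinearMap.ext
    rintro ⟨a, b⟩
    change _ = L1 (a, b)
    simp only [L1, ContinuousLinearMap.prod_apply, _root_.sub_apply,
        _root_.add_apply,
        _root_.smul_apply, ContinuousLinearMap.coe_fst',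
        ContinuousLinearMap.coe_snd', smul_eq_mul, Prod.mk.injEq, hγ0, hE0, Pi.sub_apply, Pi.mul_apply]
    refine ⟨by ring, ?_⟩
    linear_combination (-(fderiv ℝ γ (x₀, 0)) (a, b)) * hx
  have hfa : f (x₀, 0) = (0, 0) := by
    simp only [f, hγ0, hE0, Prod.mk.injEq]
    refine ⟨by ring, by linear_combination (-g) * hx⟩
  have hs := hf.hasStrictFDerivAt' hf' one_ne_zero
  let G := hs.localInverse f e (x₀, 0)
  have hG1 : ContDiffAt ℝ 1 G (0, 0) := by
    have := hf.to_localInverse hf' one_ne_zero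
    rw [hfa] at this
    exact this
  have hG2 : HasFDerivAt G (L2) (0, 0) := by
    have := hs.to_localInverse
    rw [hfa] at this
    exact this.hasFDerivAt
  have hG3 : ∀ᶠ y in 𝓝 ((0:ℝ), (0:ℝ)), f (G y) = y := by
    have := hs.eventually_right_inverse
    rw [hfa] at this
    exact this
  have hG4 : G (0, 0) = (x₀, 0) := by
    have := hs.localInverse_apply_image
    rw [hfa] at this
    exact this
  have hi : ContDiffAt ℝ 1 (fun c : ℝ => (c, (0:ℝ))) 0 := contDiffAt_id.prodMk contDiffAt_const
  have hi' : HasDerivAt (fun c : ℝ => (c, (0:ℝ))) ((1:ℝ), (0:ℝ)) 0 :=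
    (hasDerivAt_id (0:ℝ)).prodMk (hasDerivAt_const (0:ℝ) (0:ℝ))
  have hφ : ContDiffAt ℝ 1 (fun c : ℝ => G (c, 0)) 0 :=
    ContDiffAt.comp (0:ℝ) (g := G) hG1 hi
  have hφ' : HasDerivAt (fun c : ℝ => G (c, 0)) (L2 (1, 0)) 0 :=
    HasFDerivAt.comp_hasDerivAt (0:ℝ) (l := G) hG2 hi'
  refine ⟨fun c => (G (c, 0)).1, fun c => (G (c, 0)).2, hφ.fst, hφ.snd, by simp [hG4],
    by simp [hG4], ?_, ?_, ?_⟩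
  · have := (hasFDerivAt_fst (𝕜 := ℝ) (p := G (0,0))).comp_hasDerivAt (0:ℝ) hφ'
    refine (HasDerivAt.deriv this).trans ?_
    simp [L2]
  · have := (hasFDerivAt_snd (𝕜 := ℝ) (p := G (0,0))).comp_hasDerivAt (0:ℝ) hφ'
    refine (HasDerivAt.deriv this).trans ?_
    simp [L2]
  · have ht : Tendsto (fun c : ℝ => (c, (0:ℝ))) (𝓝 0) (𝓝 (0, 0)) := hi.continuousAt
    filter_upwards [ht.eventually hG3] with c hc
    exact ⟨congrArg Prod.fst hc, congrArg Prod.snd hc⟩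

/-- Local curve of solutions of the tangency system in the log-coordinate. -/
lemma aux_curve (a b k δ g x₀ : ℝ) (hδ : 0 < δ) (hk : 0 < k) (hg : 0 < g) (hx : 2 * δ * x₀ = 1)
    (hgq : 2 * δ * g = 2 * a - k ^ 2 * (a * x₀ ^ 2 - b)) :
    ∃ X T : ℝ → ℝ, ContDiffAt ℝ 1 X 0 ∧ ContDiffAt ℝ 1 T 0 ∧ X 0 = x₀ ∧ T 0 = 0 ∧
      deriv X 0 = (g - 1) / (2 * g) ∧ deriv T 0 = 1 / g ∧
      ∀ᶠ c in 𝓝 (0:ℝ),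
        2 * a * (X c + T c) - 2 * δ * c
          = k * (a * X c ^ 2 - b) * sinh (k * T c) + 2 * a * X c * cosh (k * T c) ∧
        k * (a * (X c + T c) ^ 2 - b + c + δ * c * (c - 2 * (X c + T c)))
          = k * (a * X c ^ 2 - b) * cosh (k * T c) + 2 * a * X c * sinh (k * T c) := by
  obtain ⟨S, S2, hS, hS2, hS0, hS20, hs, hss⟩ := aux_sinh
  let C2 : ℝ → ℝ := fun u => S (u / 2) ^ 2 / 2
  have hC2 : ContDiffAt ℝ 1 C2 0 := by
    have h1 : ContDiffAt ℝ 1 (fun u : ℝ => S (u / 2)) 0 := by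
      refine ContDiffAt.comp (0:ℝ) (g := S) (f := fun u : ℝ => u / 2) ?_
        (contDiffAt_id.div_const 2)
      simpa using hS
    exact (h1.pow 2).div_const 2
  have hC20 : C2 0 = 1 / 2 := by simp [C2, hS0]
  have hcosh : ∀ u, cosh u = 1 + u ^ 2 * C2 u := by
    intro u
    have h1 := Real.cosh_two_mul (u / 2)
    have h2 := Real.cosh_sq (u / 2)
    rw [show 2 * (u / 2) = u by ring] at h1
    rw [h1, h2, hs]
    simp only [C2]
    ring
  have hcomp : ∀ f : ℝ → ℝ, ContDiffAt ℝ 1 f 0 →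
      ContDiffAt ℝ 1 (fun p : ℝ × ℝ => f (k * p.2)) (x₀, 0) := by
    intro f hf
    refine ContDiffAt.comp (x₀, (0:ℝ)) (g := f) (f := fun p : ℝ × ℝ => k * p.2) ?_
      (contDiffAt_const.mul contDiffAt_snd)
    simpa using hf
  have hS' := hcomp S hS
  have hS2' := hcomp S2 hS2
  have hC2' := hcomp C2 hC2
  have h1 : ContDiffAt ℝ 1 (fun p : ℝ × ℝ => p.1) (x₀, 0) := contDiffAt_fst
  have h2 : ContDiffAt ℝ 1 (fun p : ℝ × ℝ => p.2) (x₀, 0) := contDiffAt_snd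
  obtain ⟨X, T, hX, hT, hX0, hT0, hX', hT', hev⟩ := aux_ift
    (fun p => (2 * a - (a * p.1 ^ 2 - b) * k ^ 2 * S (k * p.2)
      - 2 * a * p.1 * k ^ 2 * p.2 * C2 (k * p.2)) / (2 * δ))
    (fun p => a - (a * p.1 ^ 2 - b) * k ^ 2 * C2 (k * p.2) - 2 * a * p.1 * k * S2 (k * p.2))
    δ g x₀ hδ hg hx
    (((contDiffAt_const.sub ((((contDiffAt_const.mul (h1.pow 2)).sub contDiffAt_const).mul
      contDiffAt_const).mul hS')).sub ((((contDiffAt_const.mul h1).mul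
      contDiffAt_const).mul h2).mul hC2')).div_const (2 * δ))
    ((contDiffAt_const.sub ((((contDiffAt_const.mul (h1.pow 2)).sub contDiffAt_const).mul
      contDiffAt_const).mul hC2')).sub (((contDiffAt_const.mul h1).mul
      contDiffAt_const).mul hS2'))
    (by
      simp only [mul_zero, hS0]
      field_simp
      linear_combination -hgq)
    (by
      simp only [mul_zero, hS20, hC20]
      linear_combination -hgq / 2)
  refine ⟨X, T, hX, hT, hX0, hT0, hX', hT', ?_⟩
  filter_upwards [hev] with c hc
  obtain ⟨e1, e2⟩ := hc
  rw [e1] at e2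
  have e3 := hss (k * T c)
  have e4 := hcosh (k * T c)
  have e5 := hs (k * T c)
  generalize hγ : (2 * a - (a * X c ^ 2 - b) * k ^ 2 * S (k * T c)
      - 2 * a * X c * k ^ 2 * T c * C2 (k * T c)) / (2 * δ) = γ at e1 e2
  have hγ' : (2 * a - (a * X c ^ 2 - b) * k ^ 2 * S (k * T c)
      - 2 * a * X c * k ^ 2 * T c * C2 (k * T c)) = 2 * δ * γ := by
    rw [← hγ]; field_simp
  rw [e4, e5]
  generalize C2 (k * T c) = c2 at *
  generalize hSS : S (k * T c) = s1 at *
  generalize S2 (k * T c) = s2 at *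
  generalize T c = t at *
  generalize X c = x at *
  constructor
  · linear_combination t * hγ' + 2 * δ * e1
  · linear_combination (k * t) * e2 - (k * (1 + δ * (c - 2 * x - 2 * t))) * e1 - 2*a*x*k*t * e3

lemma aux_deriv (H h : ℝ → ℝ) (k x h' : ℝ) (hk : 0 < k) (hh : HasDerivAt h h' x)
    (hH : ∀ᶠ y in 𝓝 (exp (2 * k * x)), H y = √y * h (log y / (2 * k))) :
    HasDerivAt H (exp (-(k * x)) * (k * h x + h') / (2 * k)) (exp (2 * k * x)) := by
  have hpos := exp_pos (2 * k * x)
  have hlog : log (exp (2 * k * x)) / (2 * k) = x := by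
    rw [log_exp]; field_simp
  have hsq : √(exp (2 * k * x)) = exp (k * x) := by
    rw [show 2 * k * x = k * x + k * x by ring, exp_add, sqrt_mul_self (exp_pos _).le]
  have h1 : HasDerivAt (fun y => √y) (1 / (2 * √(exp (2 * k * x)))) (exp (2 * k * x)) :=
    Real.hasDerivAt_sqrt hpos.ne'
  have h2 : HasDerivAt (fun y => log y / (2 * k)) ((exp (2 * k * x))⁻¹ / (2 * k))
      (exp (2 * k * x)) := (Real.hasDerivAt_log hpos.ne').div_const _
  have h3 : HasDerivAt (fun y => h (log y / (2 * k))) (h' * ((exp (2 * k * x))⁻¹ / (2 * k)))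
      (exp (2 * k * x)) := by
    refine HasDerivAt.comp (exp (2 * k * x)) (h₂ := h) (h := fun y => log y / (2 * k)) ?_ h2
    rw [hlog]; exact hh
  have h4 := (h1.mul h3).congr_of_eventuallyEq (f₁ := H) hH
  refine h4.congr_deriv ?_
  rw [hlog, hsq, exp_neg, show 2 * k * x = k * x + k * x by ring, exp_add]
  have := exp_pos (k * x)
  field_simp

lemma aux_tang (Hl Hr hl hr : ℝ → ℝ) (k x t hl' hr' : ℝ) (hk : 0 < k)
    (hhl : HasDerivAt hl hl' x) (hhr : HasDerivAt hr hr' (x + t))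
    (hHl : ∀ᶠ y in 𝓝 (exp (2 * k * x)), Hl y = √y * hl (log y / (2 * k)))
    (hHr : ∀ᶠ y in 𝓝 (exp (2 * k * (x + t))), Hr y = √y * hr (log y / (2 * k)))
    (e1 : hr' = k * hl x * sinh (k * t) + hl' * cosh (k * t))
    (e2 : k * hr (x + t) = k * hl x * cosh (k * t) + hl' * sinh (k * t)) :
    TangencySystem Hl Hr (exp (2 * k * x)) (exp (2 * k * (x + t))) := by
  have d1 := (aux_deriv Hl hl k x hl' hk hhl hHl).deriv
  have d2 := (aux_deriv Hr hr k (x + t) hr' hk hhr hHr).deriv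
  have v1 := hHl.self_of_nhds
  have v2 := hHr.self_of_nhds
  have hlog : ∀ x, log (exp (2 * k * x)) / (2 * k) = x := by
    intro x
    rw [log_exp]; field_simp
  have hsq : ∀ x, √(exp (2 * k * x)) = exp (k * x) := by
    intro x
    rw [show 2 * k * x = k * x + k * x by ring, exp_add, sqrt_mul_self (exp_pos _).le]
  rw [hlog, hsq] at v1 v2
  have p : k * hr (x + t) + hr' = exp (k * t) * (k * hl x + hl') := by
    rw [e2, e1, ← Real.cosh_add_sinh]; ring
  have m : k * hr (x + t) - hr' = exp (-(k * t)) * (k * hl x - hl') := by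
    rw [e2, e1, ← Real.cosh_sub_sinh]; ring
  have hd : deriv Hl (exp (2 * k * x)) = deriv Hr (exp (2 * k * (x + t))) := by
    rw [d1, d2, p, ← mul_assoc, ← exp_add]
    ring_nf
  have g : ∀ (x h h' : ℝ), exp (k * x) * h - exp (-(k * x)) * (k * h + h') / (2 * k)
      * exp (2 * k * x) = exp (k * x) * (k * h - h') / (2 * k) := by
    intro x h h'
    rw [exp_neg, show 2 * k * x = k * x + k * x by ring, exp_add]
    have := exp_pos (k * x)
    field_simp
    ring
  refine ⟨hd, ?_⟩
  rw [d1, d2, v1, v2, g, g, m, ← mul_assoc, ← exp_add]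
  ring_nf

end Aux

/-- there exists c₀ > 0 such that on (0,c₀) the tangency-pair functions are
monotone (ŷ₁ strictly decreasing, ŷ₂ strictly increasing), G is differentiable with
G' > 1, and the boundaries F and G are respectively strictly decreasing and strictly
increasing. -/
theorem stmt_18 (α δ lam : ℝ) (hα : 0 < α) (hδ : 0 < δ) (hlam : 0 < lam)
    (hltd : lam < α * δ)
    (f₀ : ℝ)
    (hf₀ : f₀ = (1 / Real.sqrt (2 * α)) * (Real.sqrt ((α * δ + lam) / (α * δ - lam)) - 1))
    (hf₀big : α / (2 * lam) < f₀)
    (Ψ : ℝ → ℝ) (hΨ : ∀ x, Ψ x = Real.exp (2 * Real.sqrt (2 * α) * x))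
    (Hl : ℝ → ℝ)
    (hHl : ∀ y, 0 < y → Hl y = Real.sqrt y *
      (-(lam / α ^ 2) + ((δ - lam / α) / (8 * α)) * (Real.log y) ^ 2))
    (B₀ : ℝ)
    (hB₀ : B₀ = -(2 * f₀ / (α * Real.sqrt (2 * α))) * (α * δ - lam) *
      Real.exp (f₀ * Real.sqrt (2 * α)))
    (hr1 hr2 hr Hr : ℝ → ℝ → ℝ)
    (hhr1 : ∀ c x, hr1 c x = δ * c * (c - 2 * x) + (δ - lam / α) * x ^ 2 + c - lam / α ^ 2)
    (hhr2 : ∀ c x, hr2 c x = (lam / α) * c * (c - 2 * x) + c +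
      B₀ * Real.exp (-(x - c) * Real.sqrt (2 * α)))
    (hhra : ∀ c x, x ≤ f₀ + c → hr c x = hr1 c x)
    (hhrb : ∀ c x, f₀ + c ≤ x → hr c x = hr2 c x)
    (hHr : ∀ c y, 0 < y → Hr c y = Real.sqrt y * hr c (Real.log y / (2 * Real.sqrt (2 * α))))
    (xv : ℝ → ℝ)
    (hxv : ∀ c, 0 < c →
      (xv c < f₀ + c ∧
        δ - (α * δ - lam) * (xv c) ^ 2 + c * α * (δ * (2 * xv c - c) - 1) = 0 ∧
        ∀ x, x < f₀ + c →
          δ - (α * δ - lam) * x ^ 2 + c * α * (δ * (2 * x - c) - 1) = 0 → x = xv c))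
    (c₂ : ℝ) (hc₂pos : 0 < c₂)
    (yh₁ yh₂ : ℝ → ℝ)
    (hpair : ∀ c, 0 < c → c < c₂ →
      (1 < yh₁ c ∧ yh₁ c < Ψ (1 / (2 * δ) + c / 2) ∧
        Ψ (1 / (2 * δ) + c / 2) ≤ max (Ψ (1 / (2 * δ) + c / 2)) (Ψ (xv c)) ∧
        max (Ψ (1 / (2 * δ) + c / 2)) (Ψ (xv c)) < yh₂ c ∧ yh₂ c < Ψ (f₀ + c) ∧
        TangencySystem Hl (Hr c) (yh₁ c) (yh₂ c)))
    (huniq : ∀ c, 0 < c → c < c₂ → ∀ y₁ y₂ : ℝ,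
      1 < y₁ → y₁ < Ψ (1 / (2 * δ) + c / 2) →
      Ψ (1 / (2 * δ) + c / 2) ≤ max (Ψ (1 / (2 * δ) + c / 2)) (Ψ (xv c)) →
      max (Ψ (1 / (2 * δ) + c / 2)) (Ψ (xv c)) < y₂ → y₂ < Ψ (f₀ + c) →
      TangencySystem Hl (Hr c) y₁ y₂ → y₁ = yh₁ c ∧ y₂ = yh₂ c)
    (F G : ℝ → ℝ)
    (hF : ∀ c, F c = Real.log (yh₁ c) / (2 * Real.sqrt (2 * α)))
    (hG : ∀ c, G c = Real.log (yh₂ c) / (2 * Real.sqrt (2 * α))) :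
    ∃ c₀ : ℝ, 0 < c₀ ∧ c₀ ≤ c₂ ∧
      StrictAntiOn yh₁ (Set.Ioo 0 c₀) ∧ StrictMonoOn yh₂ (Set.Ioo 0 c₀) ∧
      (∀ c ∈ Set.Ioo (0 : ℝ) c₀, DifferentiableAt ℝ G c ∧ 1 < deriv G c) ∧
      StrictAntiOn F (Set.Ioo 0 c₀) ∧ StrictMonoOn G (Set.Ioo 0 c₀) := by
  have hk : 0 < Real.sqrt (2 * α) := Real.sqrt_pos.mpr (by linarith)
  have hk2 : Real.sqrt (2 * α) ^ 2 = 2 * α := Real.sq_sqrt (by linarith)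
  have hαl : 0 < α * δ - lam := by linarith
  -- the point 1/(2δ) lies below f₀ and in the strict convexity region
  have hx0f : 1 / (2 * δ) < f₀ := by
    refine lt_trans ?_ hf₀big
    rw [div_lt_div_iff₀ (by linarith) (by linarith)]
    linarith
  have hx0pos : 0 < 1 / (2 * δ) := by positivity
  have hf₀sq : (α * δ - lam) * f₀ ^ 2 < δ := by
    have hr0 : 0 < (α * δ + lam) / (α * δ - lam) := by positivity
    have hr2 : Real.sqrt ((α * δ + lam) / (α * δ - lam)) ^ 2 * (α * δ - lam) = α * δ + lam := by
      rw [Real.sq_sqrt hr0.le]; field_simp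
    have hkf : f₀ * Real.sqrt (2 * α) = Real.sqrt ((α * δ + lam) / (α * δ - lam)) - 1 := by
      rw [hf₀]; field_simp
    generalize Real.sqrt ((α * δ + lam) / (α * δ - lam)) = r at hr2 hkf
    have hf0 : 0 < f₀ := by linarith
    have hr1 : 0 < r - 1 := by rw [← hkf]; positivity
    have h1 : f₀ ^ 2 * (2 * α) = (r - 1) ^ 2 := by rw [← hk2, ← hkf]; ring
    have h2 : (r - 1) ^ 2 * (α * δ - lam) < r ^ 2 * (α * δ - lam) := by
      apply mul_lt_mul_of_pos_right _ hαl
      nlinarith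
    have h3 : ((α * δ - lam) * f₀ ^ 2) * (2 * α) < δ * (2 * α) := by nlinarith
    exact lt_of_mul_lt_mul_right h3 (by linarith)
  obtain ⟨x₀, hx₀⟩ : ∃ x₀, x₀ = 1 / (2 * δ) := ⟨_, rfl⟩
  rw [← hx₀] at hx0f hx0pos
  have hx₀1 : 2 * δ * x₀ = 1 := by rw [hx₀]; field_simp
  have hxq : (α * δ - lam) * x₀ ^ 2 < δ := by
    refine lt_of_le_of_lt ?_ hf₀sq
    gcongr
  obtain ⟨g, hgdef⟩ : ∃ g, g = 1 - (α * δ - lam) * x₀ ^ 2 / δ := ⟨_, rfl⟩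
  have hg0 : 0 < g := by
    rw [hgdef, sub_pos, div_lt_one hδ]; exact hxq
  have hg1 : g < 1 := by
    have : 0 < (α * δ - lam) * x₀ ^ 2 / δ := by positivity
    linarith
  have hgq : 2 * δ * g = 2 * (δ - lam / α)
      - Real.sqrt (2 * α) ^ 2 * ((δ - lam / α) * x₀ ^ 2 - lam / α ^ 2) := by
    rw [hk2, hgdef]; field_simp; ring
  obtain ⟨X, T, hX, hT, hX0, hT0, hX', hT', hev⟩ :=
    aux_curve (δ - lam / α) (lam / α ^ 2) (Real.sqrt (2 * α)) δ g x₀ hδ hk hg0 hx₀1 hgq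
  have hY : ContDiffAt ℝ 1 (fun c => X c + T c) 0 := hX.add hT
  have hY' : deriv (fun c => X c + T c) 0 = (g + 1) / (2 * g) := by
    rw [deriv_fun_add (hX.differentiableAt one_ne_zero) (hT.differentiableAt one_ne_zero), hX', hT']
    field_simp; ring
  -- derivative signs near 0
  have hXneg : ∀ᶠ c in nhds (0:ℝ), deriv X c < 0 := by
    have : ContinuousAt (deriv X) 0 := (hX.derivWithin (m := 0) (by norm_num)).continuousAt
    apply this.eventually_lt_const
    rw [hX']
    exact div_neg_of_neg_of_pos (by linarith) (by linarith)
  have hYgt : ∀ᶠ c in nhds (0:ℝ), 1 < deriv (fun c => X c + T c) c := by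
    have : ContinuousAt (deriv (fun c => X c + T c)) 0 :=
      (hY.derivWithin (m := 0) (by norm_num)).continuousAt
    apply this.eventually_const_lt
    rw [hY', lt_div_iff₀ (by linarith)]
    linarith
  have hXd : ∀ᶠ c in nhds (0:ℝ), DifferentiableAt ℝ X c := by
    filter_upwards [hX.eventually (by simp)] with c hc using hc.differentiableAt one_ne_zero
  have hYd : ∀ᶠ c in nhds (0:ℝ), DifferentiableAt ℝ (fun c => X c + T c) c := by
    filter_upwards [hY.eventually (by simp)] with c hc using hc.differentiableAt one_ne_zero
  have hXpos : ∀ᶠ c in nhds (0:ℝ), 0 < X c :=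
    hX.continuousAt.eventually_const_lt (by rw [hX0]; exact hx0pos)
  have hYpos : ∀ᶠ c in nhds (0:ℝ), 0 < X c + T c :=
    hY.continuousAt.eventually_const_lt (by simpa [hX0, hT0] using hx0pos)
  have hYf : ∀ᶠ c in nhds (0:ℝ), X c + T c < f₀ :=
    hY.continuousAt.eventually_lt_const (by simpa [hX0, hT0] using hx0f)
  have hq : ∀ᶠ c in nhds (0:ℝ), 0 < δ - c * α * (δ * c + 1) := by
    have : ContinuousAt (fun c : ℝ => δ - c * α * (δ * c + 1)) 0 := by fun_prop
    exact this.eventually_const_lt (by simpa using hδ)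
  have hc2 : ∀ᶠ c in nhds (0:ℝ), c < c₂ := eventually_lt_nhds hc₂pos
  obtain ⟨ε, hε, hball⟩ := Metric.eventually_nhds_iff.mp (hev.and (hXneg.and (hYgt.and (hXd.and
    (hYd.and (hXpos.and (hYpos.and (hYf.and (hq.and hc2)))))))))
  have hin : ∀ c, 0 ≤ c → c < ε → dist c 0 < ε := by
    intro c h0 h1
    rw [Real.dist_eq, sub_zero, abs_of_nonneg h0]; exact h1
  -- strict monotonicity of the curve on [0, ε)
  have hXanti : StrictAntiOn X (Set.Ico 0 ε) := by
    apply strictAntiOn_of_deriv_neg (convex_Ico 0 ε)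
    · intro c hc
      exact (hball (hin c hc.1 hc.2)).2.2.2.1.continuousAt.continuousWithinAt
    · intro c hc
      rw [interior_Ico] at hc
      exact (hball (hin c hc.1.le hc.2)).2.1
  have hYmono : StrictMonoOn (fun c => (X c + T c) - c) (Set.Ico 0 ε) := by
    apply strictMonoOn_of_deriv_pos (convex_Ico 0 ε)
    · intro c hc
      exact ((hball (hin c hc.1 hc.2)).2.2.2.2.1.continuousAt.sub continuousAt_id).continuousWithinAt
    · intro c hc
      rw [interior_Ico] at hc
      have h := hball (hin c hc.1.le hc.2)
      have hd := (h.2.2.2.2.1.hasDerivAt.sub (hasDerivAt_id c)).deriv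
      have h1 := h.2.2.1
      change 0 < deriv ((fun c => X c + T c) - id) c
      rw [hd]; linarith
  have hmem0 : (0:ℝ) ∈ Set.Ico 0 ε := ⟨le_rfl, hε⟩
  -- identification with the tangency pair
  have hid : ∀ c, 0 < c → c < ε → yh₁ c = Real.exp (2 * Real.sqrt (2 * α) * X c) ∧
      yh₂ c = Real.exp (2 * Real.sqrt (2 * α) * (X c + T c)) := by
    intro c hc hcε
    obtain ⟨⟨e1, e2⟩, -, -, -, -, hXp, hYp, hYfc, hqc, hcc⟩ := hball (hin c hc.le hcε)
    have hcm : c ∈ Set.Ico 0 ε := ⟨hc.le, hcε⟩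
    have hXx : X c < x₀ := by rw [← hX0]; exact hXanti hmem0 hcm hc
    have hYx : x₀ + c < X c + T c := by
      have := hYmono hmem0 hcm hc
      simp only [hX0, hT0] at this
      linarith
    -- the root xv is negative
    have hxvneg : xv c < 0 := by
      obtain ⟨h1, h2, h3⟩ := hxv c hc
      by_contra hcon
      push Not at hcon
      have hsum : (α * δ - lam) * (2 * c * α * δ / (α * δ - lam) - xv c)
          = 2 * c * α * δ - (α * δ - lam) * xv c := by field_simp
      generalize 2 * c * α * δ / (α * δ - lam) - xv c = x' at hsum
      have hprod : xv c * ((α * δ - lam) * x') = -(δ - c * α * (δ * c + 1)) := by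
        rw [hsum]; linear_combination h2
      have hx'neg : x' < 0 := by
        by_contra hx'
        push Not at hx'
        have : 0 ≤ xv c * ((α * δ - lam) * x') := by positivity
        linarith
      have hroot : δ - (α * δ - lam) * x' ^ 2 + c * α * (δ * (2 * x' - c) - 1) = 0 := by
        linear_combination (-x') * hsum + hprod
      have := h3 x' (by linarith) hroot
      linarith
    have hmono : ∀ u v : ℝ, u < v → Ψ u < Ψ v := by
      intro u v huv
      rw [hΨ, hΨ]
      apply Real.exp_lt_exp.mpr
      exact mul_lt_mul_of_pos_left huv (by linarith)
    have hΨX := hΨ (X c)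
    have hΨY := hΨ (X c + T c)
    have htan : TangencySystem Hl (Hr c) (Ψ (X c)) (Ψ (X c + T c)) := by
      rw [hΨX, hΨY]
      have dl : HasDerivAt (fun x : ℝ => (δ - lam / α) * x ^ 2 - lam / α ^ 2)
          (2 * (δ - lam / α) * X c) (X c) := by
        refine ((((hasDerivAt_id (X c)).pow 2).const_mul (δ - lam / α)).sub_const
          (lam / α ^ 2)).congr_deriv ?_
        simp; ring
      have dr : HasDerivAt (hr1 c)
          (2 * (δ - lam / α) * (X c + T c) - 2 * δ * c) (X c + T c) := by
        rw [show hr1 c = fun x => δ * c * (c - 2 * x) + (δ - lam / α) * x ^ 2 + c - lam / α ^ 2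
          from funext (hhr1 c)]
        refine (((((((hasDerivAt_id (X c + T c)).const_mul 2).const_sub c).const_mul (δ * c)).add
          (((hasDerivAt_id (X c + T c)).pow 2).const_mul (δ - lam / α))).add_const c).sub_const
          (lam / α ^ 2)).congr_deriv ?_
        simp; ring
      refine aux_tang Hl (Hr c) (fun x : ℝ => (δ - lam / α) * x ^ 2 - lam / α ^ 2) (hr1 c)
        (Real.sqrt (2 * α)) (X c) (T c) _ _ hk dl dr ?_ ?_ e1 ?_
      · filter_upwards [eventually_gt_nhds (Real.exp_pos _)] with y hy
        rw [hHl y hy, div_pow, mul_pow, hk2]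
        congr 1
        field_simp
        ring
      · have hlt : Real.exp (2 * Real.sqrt (2 * α) * (X c + T c))
            < Real.exp (2 * Real.sqrt (2 * α) * (f₀ + c)) := by
          rw [← hΨ, ← hΨ]; exact hmono _ _ (by linarith)
        filter_upwards [eventually_gt_nhds (Real.exp_pos _), eventually_lt_nhds hlt] with y hy hy2
        rw [hHr c y hy, hhra]
        rw [div_le_iff₀ (by linarith)]
        have := (Real.log_lt_iff_lt_exp hy).mpr hy2
        linarith
      · rw [hhr1, ← e2]; ring
    have hres := huniq c hc hcc (Ψ (X c)) (Ψ (X c + T c))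
      (by rw [hΨX]; apply Real.one_lt_exp_iff.mpr; positivity)
      (hmono _ _ (by rw [← hx₀]; linarith)) (le_max_left _ _)
      (max_lt (hmono _ _ (by rw [← hx₀]; linarith)) (hmono _ _ (by linarith)))
      (hmono _ _ (by linarith)) htan
    exact ⟨by rw [← hres.1, hΨX], by rw [← hres.2, hΨY]⟩
  have hFX : ∀ c, 0 < c → c < ε → F c = X c := by
    intro c h0 h1
    rw [hF, (hid c h0 h1).1, Real.log_exp]; field_simp
  have hGY : ∀ c, 0 < c → c < ε → G c = X c + T c := by
    intro c h0 h1
    rw [hG, (hid c h0 h1).2, Real.log_exp]; field_simp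
  have hFanti : ∀ u v, 0 < u → u < v → v < ε → X v < X u := fun u v h0 h1 h2 =>
    hXanti ⟨h0.le, h1.trans h2⟩ ⟨(h0.trans h1).le, h2⟩ h1
  have hGmono : ∀ u v, 0 < u → u < v → v < ε → X u + T u < X v + T v := by
    intro u v h0 h1 h2
    have := hYmono ⟨h0.le, h1.trans h2⟩ ⟨(h0.trans h1).le, h2⟩ h1
    simp only at this
    linarith
  have hmin : ∀ c, c < min ε c₂ → c < ε := fun c h => lt_of_lt_of_le h (min_le_left _ _)
  refine ⟨min ε c₂, lt_min hε hc₂pos, min_le_right _ _, ?_, ?_, ?_, ?_, ?_⟩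
  · intro u hu v hv huv
    rw [(hid u hu.1 (hmin u hu.2)).1, (hid v hv.1 (hmin v hv.2)).1]
    apply Real.exp_lt_exp.mpr
    exact mul_lt_mul_of_pos_left (hFanti u v hu.1 huv (hmin v hv.2)) (by linarith)
  · intro u hu v hv huv
    rw [(hid u hu.1 (hmin u hu.2)).2, (hid v hv.1 (hmin v hv.2)).2]
    apply Real.exp_lt_exp.mpr
    exact mul_lt_mul_of_pos_left (hGmono u v hu.1 huv (hmin v hv.2)) (by linarith)
  · intro c hc
    have hev2 : G =ᶠ[nhds c] fun c => X c + T c := by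
      filter_upwards [isOpen_Ioo.mem_nhds hc] with u hu
      exact hGY u hu.1 (hmin u hu.2)
    have h := hball (hin c hc.1.le (hmin c hc.2))
    refine ⟨h.2.2.2.2.1.congr_of_eventuallyEq hev2, ?_⟩
    rw [hev2.deriv_eq]
    exact h.2.2.1
  · intro u hu v hv huv
    rw [hFX u hu.1 (hmin u hu.2), hFX v hv.1 (hmin v hv.2)]
    exact hFanti u v hu.1 huv (hmin v hv.2)
  · intro u hu v hv huv
    rw [hGY u hu.1 (hmin u hu.2), hGY v hv.1 (hmin v hv.2)]
    exact hGmono u v hu.1 huv (hmin v hv.2)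
end
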